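/- Let n ≥ 1 and let f, h : ℝ^{2n+1} → ℝ^{2n+1} be diffeomorphisms, each connected to the identity by a smooth path of diffeomorphisms. Then there exists a positive smooth path of diffeomorphisms (g_t)_{t∈[0,1]} of ℝ^{2n+1} with g_0 = f and g_1 = h. -/

import Mathlib

open Set Function

noncomputable section

/-- `ℝ^{2n+1}` with coordinates `(x, y, z) ∈ ℝⁿ × ℝⁿ × ℝ`. -/
abbrev E (n : ℕ) : Type := (Fin n → ℝ) × (Fin n → ℝ) × ℝ

/-- The standard contact form `α₀ = dz + ∑ xᵢ dyᵢ`: at the point `p = (x,y,z)` it sends the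
vector `v = (u,w,c)` to `c + ∑ xᵢ wᵢ`. -/
def α₀ (n : ℕ) (p v : E n) : ℝ := v.2.2 + ∑ i, p.1 i * v.2.1 i

/-- A diffeomorphism of `ℝ^{2n+1}`: a smooth bijection with smooth inverse. -/
def IsDiffeo (n : ℕ) (f : E n → E n) : Prop :=
  ContDiff ℝ (⊤ : ℕ∞) f ∧ ∃ g : E n → E n, ContDiff ℝ (⊤ : ℕ∞) g ∧ LeftInverse g f ∧ RightInverse g f

/-- A smooth path of diffeomorphisms, parametrized by `t ∈ [0,1]` (smoothly extended to `ℝ`):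
a smooth map such that `g_t := g(t,·)` is a diffeomorphism for every `t ∈ [0,1]`. -/
def IsSmoothPath (n : ℕ) (g : ℝ × E n → E n) : Prop :=
  ContDiff ℝ (⊤ : ℕ∞) g ∧ ∀ t ∈ Icc (0:ℝ) 1, IsDiffeo n (fun p => g (t, p))

/-- The time derivative `∂ₜ g(t,q)` of a path. -/
def pathDeriv (n : ℕ) (g : ℝ × E n → E n) (t : ℝ) (q : E n) : E n :=
  deriv (fun s => g (s, q)) t

/-- A path is positive if `α₀(g(t,q))(∂ₜ g(t,q)) > 0` for all `t ∈ [0,1]` and all `q`. -/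
def IsPositivePath (n : ℕ) (g : ℝ × E n → E n) : Prop :=
  ∀ t ∈ Icc (0:ℝ) 1, ∀ q, 0 < α₀ n (g (t, q)) (pathDeriv n g t q)

/-- A path is null if `α₀(g(t,q))(∂ₜ g(t,q)) = 0` for all `t ∈ [0,1]` and all `q`. -/
def IsNullPath (n : ℕ) (g : ℝ × E n → E n) : Prop :=
  ∀ t ∈ Icc (0:ℝ) 1, ∀ q, α₀ n (g (t, q)) (pathDeriv n g t q) = 0

/-- A path is compactly supported if all `g(t,·)` are the identity outside a fixed compact set. -/
def IsCompactlySupportedPath (n : ℕ) (g : ℝ × E n → E n) : Prop :=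
  ∃ K : Set (E n), IsCompact K ∧ ∀ t ∈ Icc (0:ℝ) 1, ∀ p ∉ K, g (t, p) = p

/-- `f` is connected to the identity by a smooth path of diffeomorphisms. -/
def ConnToId (n : ℕ) (f : E n → E n) : Prop :=
  ∃ g : ℝ × E n → E n, IsSmoothPath n g ∧ (∀ p, g (0, p) = p) ∧ (∀ p, g (1, p) = f p)

/-- `f` is connected to the identity by a compactly supported smooth path of diffeomorphisms. -/
def ConnToIdCompactlySupported (n : ℕ) (f : E n → E n) : Prop :=
  ∃ g : ℝ × E n → E n, IsSmoothPath n g ∧ IsCompactlySupportedPath n g ∧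
    (∀ p, g (0, p) = p) ∧ (∀ p, g (1, p) = f p)

/-!
A path `ν_t` from the identity whose tracks are tangent to `ker α₀` is turned into a positive path
by adding a uniform motion in the Reeb direction: since `α₀` does not depend on `z`, the path
`g_t = ν_t ∘ f + t ∂_z` satisfies `α₀(∂ₜ g_t) = 1`, and it joins `f` to `ν₁ ∘ f + ∂_z`. It is
therefore enough to see that every diffeomorphism isotopic to the identity, such as `h ∘ f⁻¹`
followed by the translation by `-∂_z`, is the end of a null path.

A diffeomorphism `id + v` with `v` compactly supported and `C¹`-small is the product of four
straight-line moves, alternately in the `x`-directions and in hyperplanes of the `(y, z)`-space,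
each of which is null. Subdividing the time interval extends this to compactly supported isotopies.
An arbitrary isotopy `F` is written as `B (B⁻¹ F)`, where `B` is supported in a locally finite
family of disjoint spherical shells and agrees with `F` on annuli inside them; then `B⁻¹ F` is
supported between consecutive annuli. Both factors are thus locally finite products of isotopies
with disjoint compact supports, to which the compact case applies.
-/

open scoped ContDiff NNReal Topology

lemma eqOn_inv_id {X : Type*} {σ : Equiv.Perm X} {s : Set X} (hσ : EqOn σ id s) :
    EqOn ⇑σ⁻¹ id s := fun _ hp => Equiv.Perm.inv_eq_iff_eq.2 (hσ hp).symm

section DiffeoGroup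

variable {V : Type*} [NormedAddCommGroup V] [NormedSpace ℝ V] {σ τ : Equiv.Perm V}

variable (V) in
/-- The smooth diffeomorphisms of `V`, as a subgroup of the permutations of `V`: products and
inverses of diffeomorphisms are those of `Equiv.Perm V`. -/
def diffeoGroup : Subgroup (Equiv.Perm V) where
  carrier := {σ | ContDiff ℝ ∞ σ ∧ ContDiff ℝ ∞ ⇑σ⁻¹}
  mul_mem' hσ hτ := ⟨hσ.1.comp hτ.1, hτ.2.comp hσ.2⟩
  one_mem' := ⟨contDiff_id, contDiff_id⟩
  inv_mem' hσ := ⟨hσ.2, hσ.1⟩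

lemma contDiff_of_mem_diffeoGroup (hσ : σ ∈ diffeoGroup V) : ContDiff ℝ ∞ σ := hσ.1

lemma differentiable_of_mem_diffeoGroup (hσ : σ ∈ diffeoGroup V) : Differentiable ℝ σ :=
  hσ.1.differentiable (by simp)

lemma fderiv_inv_comp_fderiv (hσ : σ ∈ diffeoGroup V) (p : V) :
    (fderiv ℝ ⇑σ⁻¹ (σ p)).comp (fderiv ℝ σ p) = .id ℝ V := by
  rw [← fderiv_comp p (differentiable_of_mem_diffeoGroup (inv_mem hσ) _)
    (differentiable_of_mem_diffeoGroup hσ p), ← Equiv.Perm.coe_mul, inv_mul_cancel,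
    Equiv.Perm.coe_one, fderiv_id]

/-- The derivative of a diffeomorphism at a point, as an isomorphism. -/
def fderivEquiv (hσ : σ ∈ diffeoGroup V) (p : V) : V ≃L[ℝ] V :=
  .equivOfInverse (fderiv ℝ σ p) (fderiv ℝ ⇑σ⁻¹ (σ p))
    (fun x => by simpa using congr($(fderiv_inv_comp_fderiv hσ p) x))
    (fun x => by simpa using congr($(fderiv_inv_comp_fderiv (inv_mem hσ) (σ p)) x))

lemma coe_fderivEquiv (hσ : σ ∈ diffeoGroup V) (p : V) :
    (fderivEquiv hσ p : V →L[ℝ] V) = fderiv ℝ σ p := rfl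

lemma fderiv_inv_eq_inverse (hσ : σ ∈ diffeoGroup V) (q : V) :
    fderiv ℝ ⇑σ⁻¹ q = (fderiv ℝ σ (σ⁻¹ q)).inverse := by
  rw [← coe_fderivEquiv hσ, ContinuousLinearMap.inverse_equiv]
  exact congrArg (fderiv ℝ ⇑σ⁻¹) (σ.apply_symm_apply q).symm

lemma image_mem_nhds_of_mem_diffeoGroup (hσ : σ ∈ diffeoGroup V) {p : V} {W : Set V}
    (hW : W ∈ 𝓝 p) : σ '' W ∈ 𝓝 (σ p) :=
  (Homeomorph.mk σ hσ.1.continuous hσ.2.continuous).isOpenMap.image_mem_nhds hW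

lemma mem_diffeoGroup_of_eventuallyEq (h : ∀ p, ∃ σ ∈ diffeoGroup V, τ =ᶠ[𝓝 p] σ) :
    τ ∈ diffeoGroup V := by
  refine ⟨contDiff_iff_contDiffAt.2 fun p => ?_, contDiff_iff_contDiffAt.2 fun q => ?_⟩
  · obtain ⟨σ, hσ, hτσ⟩ := h p
    exact hσ.1.contDiffAt.congr_of_eventuallyEq hτσ
  · obtain ⟨p, rfl⟩ := τ.surjective q
    obtain ⟨σ, hσ, hτσ⟩ := h p
    refine hσ.2.contDiffAt.congr_of_eventuallyEq ?_
    rw [hτσ.eq_of_nhds]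
    filter_upwards [image_mem_nhds_of_mem_diffeoGroup hσ hτσ]
    rintro _ ⟨x, hx : τ x = σ x, rfl⟩
    exact (τ.symm_apply_eq.2 hx.symm).trans (σ.symm_apply_apply x).symm

lemma mem_diffeoGroup_of_coe_eq_id_add [CompleteSpace V] {w : V → V}
    (hw : ContDiff ℝ ∞ w) (hw' : ∀ p, ‖fderiv ℝ w p‖ < 1) (hσ : Continuous ⇑σ⁻¹)
    (hσw : ∀ p, σ p = p + w p) : σ ∈ diffeoGroup V := by
  have hcoe : ⇑σ = id + w := funext hσw
  have hsmooth : ContDiff ℝ ∞ σ := hcoe ▸ contDiff_id.add hw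
  refine ⟨hsmooth, (Homeomorph.mk σ hsmooth.continuous hσ).contDiff_symm (f₀' := fun p =>
    .unitsEquiv ℝ V (Units.oneSub (-fderiv ℝ w p) (by simpa using hw' p))) (fun p => ?_) hsmooth⟩
  have hderiv := (hasFDerivAt_id p).add (hw.differentiable (by simp) p).hasFDerivAt
  rw [← hcoe] at hderiv
  exact hderiv.congr_fderiv (by ext v; simp)

lemma exists_mem_diffeoGroup_eq_id_add [CompleteSpace V] {w : V → V} (hw : ContDiff ℝ ∞ w)
    {c : ℝ≥0} (hc : c < 1) (hwc : ∀ p, ‖fderiv ℝ w p‖ ≤ c) :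
    ∃ σ ∈ diffeoGroup V, ∀ p, σ p = p + w p := by
  have happrox : ApproximatesLinearOn (fun p => p + w p)
      (ContinuousLinearEquiv.refl ℝ V : V →L[ℝ] V) univ c := fun p _ q _ => by
    have hlip := convex_univ.norm_image_sub_le_of_norm_fderiv_le
      (fun x _ => hw.differentiable (by simp) x) (fun x _ => hwc x) (mem_univ q) (mem_univ p)
    have hsub : p + w p - (q + w q) - (p - q) = w p - w q := by abel
    simpa [hsub] using hlip
  have hc' : Subsingleton V ∨
      c < ‖((ContinuousLinearEquiv.refl ℝ V).symm : V →L[ℝ] V)‖₊⁻¹ :=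
    (subsingleton_or_nontrivial V).imp_right fun (_ : Nontrivial V) => by
      simpa using hc
  exact ⟨(happrox.toHomeomorph _ hc').toEquiv, mem_diffeoGroup_of_coe_eq_id_add hw
    (fun p => (hwc p).trans_lt (by exact_mod_cast hc))
    (happrox.toHomeomorph _ hc').symm.continuous fun p => rfl, fun p => rfl⟩

end DiffeoGroup

section C1Family

variable {V : Type*} [NormedAddCommGroup V] [NormedSpace ℝ V]
variable {T T' : Type*} [TopologicalSpace T] [TopologicalSpace T'] {F F' : T → Equiv.Perm V}

/-- A family of diffeomorphisms depending continuously on the parameter in the `C¹` topology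
(uniform convergence on compact sets of the maps and of their derivatives), encoded as joint
continuity of the family and of its derivative in the space variable. -/
structure IsC1Family (F : T → Equiv.Perm V) : Prop where
  mem : ∀ t, F t ∈ diffeoGroup V
  continuous : Continuous fun q : T × V => F q.1 q.2
  continuous_fderiv : Continuous fun q : T × V => fderiv ℝ (F q.1) q.2

lemma dist_inv_le_of_norm_fderiv_sub_le [CompleteSpace V] {σ : Equiv.Perm V}
    (hσ : Differentiable ℝ σ) (A : V ≃L[ℝ] V) {p q : V} {m : ℝ≥0} {r : ℝ} (hr : 0 ≤ r)
    (hA : ∀ x ∈ Metric.closedBall p r, ‖fderiv ℝ σ x - A‖ ≤ m)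
    (hq : dist q (σ p) ≤ (‖(A.symm : V →L[ℝ] V)‖⁻¹ - m) * r) : dist (σ⁻¹ q) p ≤ r := by
  have happrox : ApproximatesLinearOn σ (A : V →L[ℝ] V) (Metric.closedBall p r) m :=
    fun x hx y hy => (convex_closedBall p r).norm_image_sub_le_of_norm_fderiv_le'
      (fun x _ => hσ x) hA hy hx
  obtain ⟨x, hx, rfl⟩ := happrox.surjOn_closedBall_of_nonlinearRightInverse
    A.toNonlinearRightInverse hr subset_rfl hq
  rwa [Equiv.Perm.coe_inv, σ.symm_apply_apply]

namespace IsC1Family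

lemma differentiable (hF : IsC1Family F) (t : T) : Differentiable ℝ (F t) :=
  differentiable_of_mem_diffeoGroup (hF.mem t)

lemma const {σ : Equiv.Perm V} (hσ : σ ∈ diffeoGroup V) : IsC1Family fun _ : T => σ :=
  ⟨fun _ => hσ, hσ.1.continuous.comp continuous_snd,
    (hσ.1.continuous_fderiv (by simp)).comp continuous_snd⟩

lemma comp (hF : IsC1Family F) {c : T' → T} (hc : Continuous c) :
    IsC1Family fun t => F (c t) :=
  ⟨fun t => hF.mem (c t), hF.continuous.comp (hc.prodMap continuous_id),
    hF.continuous_fderiv.comp (hc.prodMap continuous_id)⟩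

lemma mul (hF : IsC1Family F) (hF' : IsC1Family F') : IsC1Family fun t => F t * F' t := by
  have hF'q : Continuous fun q : T × V => (q.1, F' q.1 q.2) :=
    continuous_fst.prodMk hF'.continuous
  refine ⟨fun t => mul_mem (hF.mem t) (hF'.mem t), hF.continuous.comp hF'q, ?_⟩
  have hchain : ∀ q : T × V, fderiv ℝ ⇑(F q.1 * F' q.1) q.2 =
      (fderiv ℝ (F q.1) (F' q.1 q.2)).comp (fderiv ℝ (F' q.1) q.2) := fun q =>
    fderiv_comp q.2 (hF.differentiable q.1 _) (hF'.differentiable q.1 _)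
  simp only [hchain]
  exact (hF.continuous_fderiv.comp hF'q).clm_comp hF'.continuous_fderiv

lemma continuous_inv [CompleteSpace V] (hF : IsC1Family F) :
    Continuous fun q : T × V => (F q.1)⁻¹ q.2 := by
  obtain _ | (_ : Nontrivial V) := subsingleton_or_nontrivial V
  · exact continuous_of_const fun _ _ => Subsingleton.elim _ _
  refine continuous_iff_continuousAt.2 fun ⟨t₀, q₀⟩ =>
    Metric.nhds_basis_closedBall.tendsto_right_iff.2 fun ε hε => ?_
  set p₀ := (F t₀)⁻¹ q₀ with hp₀
  let A := fderivEquiv (hF.mem t₀) p₀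
  have hA : 0 < ‖(A.symm : V →L[ℝ] V)‖₊⁻¹ := inv_pos.2 A.nnnorm_symm_pos
  obtain ⟨m, hm, hmA⟩ := exists_between hA
  have hnear : ∀ᶠ q in 𝓝 (t₀, p₀), ‖fderiv ℝ (F q.1) q.2 - A‖ ≤ m :=
    (hF.continuous_fderiv.sub continuous_const).norm.continuousAt.eventually_le_const <| by
      simpa [A, coe_fderivEquiv] using hm
  rw [nhds_prod_eq] at hnear
  obtain ⟨P, hP, Q, hQ, hPQ⟩ := Filter.eventually_prod_iff.1 hnear
  obtain ⟨r, hr, hrQ⟩ := Metric.nhds_basis_closedBall.eventually_iff.1 hQ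
  have hclose : ∀ᶠ q : T × V in 𝓝 (t₀, q₀),
      dist q.2 (F q.1 p₀) ≤ (‖(A.symm : V →L[ℝ] V)‖⁻¹ - m) * min r ε := by
    have hcont : Continuous fun q : T × V => dist q.2 (F q.1 p₀) :=
      continuous_snd.dist (hF.continuous.comp (continuous_fst.prodMk continuous_const))
    refine hcont.continuousAt.eventually_le_const ?_
    have : (m : ℝ) < ‖(A.symm : V →L[ℝ] V)‖⁻¹ := by exact_mod_cast hmA
    simpa [hp₀] using mul_pos (sub_pos.2 this) (lt_min hr hε)
  filter_upwards [continuousAt_fst.eventually hP, hclose] with ⟨t, q⟩ ht hq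
  exact (dist_inv_le_of_norm_fderiv_sub_le (hF.differentiable t) A (le_min hr.le hε.le)
    (fun x hx => hPQ ht (hrQ (Metric.closedBall_subset_closedBall (min_le_left _ _) hx)))
    hq).trans (min_le_right _ _)

lemma inv [CompleteSpace V] (hF : IsC1Family F) : IsC1Family fun t => (F t)⁻¹ := by
  refine ⟨fun t => inv_mem (hF.mem t), hF.continuous_inv, ?_⟩
  have hcont : Continuous fun q : T × V => fderiv ℝ (F q.1) ((F q.1)⁻¹ q.2) :=
    hF.continuous_fderiv.comp (continuous_fst.prodMk hF.continuous_inv)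
  simp only [fderiv_inv_eq_inverse (hF.mem _)]
  refine continuous_iff_continuousAt.2 fun q => ?_
  exact (contDiffAt_map_inverse (𝕜 := ℝ) (n := 0)
    (fderivEquiv (hF.mem q.1) ((F q.1)⁻¹ q.2))).continuousAt.comp (x := q) hcont.continuousAt

lemma of_eqOn_nhds (h : ∀ p, ∃ F' : T → Equiv.Perm V, IsC1Family F' ∧
    ∃ W ∈ 𝓝 p, ∀ t, EqOn (F t) (F' t) W) : IsC1Family F := by
  refine ⟨fun t => mem_diffeoGroup_of_eventuallyEq fun p => ?_,
    continuous_iff_continuousAt.2 fun q => ?_, continuous_iff_continuousAt.2 fun q => ?_⟩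
  · obtain ⟨F', hF', W, hW, hFF'⟩ := h p
    exact ⟨F' t, hF'.mem t, (hFF' t).eventuallyEq_of_mem hW⟩
  · obtain ⟨F', hF', W, hW, hFF'⟩ := h q.2
    refine hF'.continuous.continuousAt.congr ?_
    filter_upwards [continuousAt_snd.eventually hW] with x hx using (hFF' x.1 hx).symm
  · obtain ⟨F', hF', W, hW, hFF'⟩ := h q.2
    refine hF'.continuous_fderiv.continuousAt.congr ?_
    filter_upwards [continuousAt_snd.eventually (eventually_mem_nhds_iff.2 hW)] with x hx
    exact ((hFF' x.1).eventuallyEq_of_mem hx).fderiv_eq.symm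

lemma exists_cutoff [CompleteSpace V] (hF : IsC1Family F) {χ : V → ℝ} (hχ : ContDiff ℝ ∞ χ)
    (hFχ : ∀ t p, ‖fderiv ℝ (fun x => χ x • (F t x - x)) p‖ ≤ 1 / 2) :
    ∃ G : T → Equiv.Perm V, IsC1Family G ∧ ∀ t p, G t p = p + χ p • (F t p - p) := by
  have hw : ∀ t, ContDiff ℝ ∞ fun x => χ x • (F t x - x) := fun t =>
    hχ.smul ((contDiff_of_mem_diffeoGroup (hF.mem t)).sub contDiff_id)
  choose G hG hGw using fun t => exists_mem_diffeoGroup_eq_id_add (c := 1 / 2) (hw t)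
    (by norm_num) (by simpa using hFχ t)
  have hcoe : ∀ t, ⇑(G t) = fun x => x + χ x • (F t x - x) := fun t => funext (hGw t)
  have hfderiv : ∀ q : T × V, fderiv ℝ (G q.1) q.2 =
      .id ℝ V + (χ q.2 • (fderiv ℝ (F q.1) q.2 - .id ℝ V) +
        (fderiv ℝ χ q.2).smulRight (F q.1 q.2 - q.2)) := fun q => by
    have hF' := (hF.differentiable q.1 q.2).hasFDerivAt.sub (hasFDerivAt_id q.2)
    have hχ' := (hχ.differentiable (by simp) q.2).hasFDerivAt
    rw [hcoe]
    exact ((hasFDerivAt_id q.2).add (hχ'.smul hF')).fderiv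
  have hχ₁ := hχ.continuous_fderiv (by simp)
  refine ⟨G, ⟨hG, ?_, ?_⟩, hGw⟩
  · simp only [hGw]
    exact continuous_snd.add
      ((hχ.continuous.comp continuous_snd).smul (hF.continuous.sub continuous_snd))
  · simp only [hfderiv]
    have hsmulRight := (ContinuousLinearMap.smulRightL ℝ V V).continuous₂.comp
      ((hχ₁.comp continuous_snd).prodMk (hF.continuous.sub continuous_snd))
    exact continuous_const.add (((hχ.continuous.comp continuous_snd).smul
      (hF.continuous_fderiv.sub continuous_const)).add hsmulRight)

end IsC1Family

end C1Family

section JetNorm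

variable {V W : Type*} [NormedAddCommGroup V] [NormedSpace ℝ V] [NormedAddCommGroup W]
  [NormedSpace ℝ W] {f g : V → W} {p : V}

/-- The size of the 1-jet of `f` at `p`. Estimates on it over a compact set express smallness in
the `C¹` topology. -/
def jetNorm (f : V → W) (p : V) : ℝ := max ‖f p‖ ‖fderiv ℝ f p‖

lemma norm_le_jetNorm (f : V → W) (p : V) : ‖f p‖ ≤ jetNorm f p := le_max_left _ _

lemma norm_fderiv_le_jetNorm (f : V → W) (p : V) : ‖fderiv ℝ f p‖ ≤ jetNorm f p :=
  le_max_right _ _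

lemma jetNorm_nonneg (f : V → W) (p : V) : 0 ≤ jetNorm f p :=
  (norm_nonneg _).trans (norm_le_jetNorm f p)

lemma continuous_jetNorm (hf : ContDiff ℝ ∞ f) : Continuous (jetNorm f) :=
  hf.continuous.norm.max (hf.continuous_fderiv (by simp)).norm

lemma jetNorm_add_le (hf : DifferentiableAt ℝ f p) (hg : DifferentiableAt ℝ g p) :
    jetNorm (fun x => f x + g x) p ≤ jetNorm f p + jetNorm g p := by
  rw [jetNorm, fderiv_fun_add hf hg]
  exact max_le
    ((norm_add_le _ _).trans (add_le_add (norm_le_jetNorm f p) (norm_le_jetNorm g p)))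
    ((norm_add_le _ _).trans (add_le_add (norm_fderiv_le_jetNorm f p)
      (norm_fderiv_le_jetNorm g p)))

lemma jetNorm_clm_comp_le {X : Type*} [NormedAddCommGroup X] [NormedSpace ℝ X] (A : W →L[ℝ] X)
    (hf : DifferentiableAt ℝ f p) : jetNorm (fun x => A (f x)) p ≤ ‖A‖ * jetNorm f p := by
  have hfderiv : fderiv ℝ (fun x => A (f x)) p = A ∘L fderiv ℝ f p :=
    (A.hasFDerivAt.comp p hf.hasFDerivAt).fderiv
  rw [jetNorm, hfderiv]
  refine max_le ((A.le_opNorm _).trans ?_) ((A.opNorm_comp_le _).trans ?_) <;> gcongr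
  exacts [norm_le_jetNorm f p, norm_fderiv_le_jetNorm f p]

lemma jetNorm_smul_le {χ : V → ℝ} (hχ : DifferentiableAt ℝ χ p) (hf : DifferentiableAt ℝ f p) :
    jetNorm (fun x => χ x • f x) p ≤ 2 * jetNorm χ p * jetNorm f p := by
  have hχf : 0 ≤ jetNorm χ p * jetNorm f p := mul_nonneg (jetNorm_nonneg _ _) (jetNorm_nonneg _ _)
  rw [mul_assoc, two_mul]
  refine max_le ?_ ?_
  · rw [norm_smul]
    exact (mul_le_mul (norm_le_jetNorm χ p) (norm_le_jetNorm f p) (norm_nonneg _)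
      (jetNorm_nonneg _ _)).trans (le_add_of_nonneg_left hχf)
  · rw [fderiv_fun_smul hχ hf]
    refine (norm_add_le _ _).trans (add_le_add ?_ ?_)
    · rw [norm_smul]
      exact mul_le_mul (norm_le_jetNorm χ p) (norm_fderiv_le_jetNorm f p) (norm_nonneg _)
        (jetNorm_nonneg _ _)
    · rw [ContinuousLinearMap.norm_smulRight_apply]
      exact mul_le_mul (norm_fderiv_le_jetNorm χ p) (norm_le_jetNorm f p) (norm_nonneg _)
        (jetNorm_nonneg _ _)

lemma norm_fderiv_le_of_eqOn_zero {L : Set V} (hL : IsClosed L) {c : ℝ} (hc : 0 ≤ c)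
    (hf : EqOn f 0 Lᶜ) (hfL : ∀ p ∈ L, ‖fderiv ℝ f p‖ ≤ c) (p : V) : ‖fderiv ℝ f p‖ ≤ c := by
  by_cases hp : p ∈ L
  · exact hfL p hp
  · rwa [(hf.eventuallyEq_of_mem (hL.isOpen_compl.mem_nhds hp)).fderiv_eq, fderiv_zero,
      Pi.zero_apply, norm_zero]

/-- `f` is smooth, vanishes off `L`, and its 1-jet has norm at most `c`. -/
structure IsC1Bounded (L : Set V) (c : ℝ) (f : V → W) : Prop where
  contDiff : ContDiff ℝ ∞ f
  eqOn_zero : EqOn f 0 Lᶜ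
  jetNorm_le : ∀ p ∈ L, jetNorm f p ≤ c

namespace IsC1Bounded

variable {X : Type*} [NormedAddCommGroup X] [NormedSpace ℝ X] {L : Set V} {c c' : ℝ}

lemma differentiable (hf : IsC1Bounded L c f) : Differentiable ℝ f :=
  hf.contDiff.differentiable (by simp)

lemma norm_fderiv_le (hf : IsC1Bounded L c f) (hL : IsClosed L) (hc : 0 ≤ c) (p : V) :
    ‖fderiv ℝ f p‖ ≤ c :=
  norm_fderiv_le_of_eqOn_zero hL hc hf.eqOn_zero
    (fun p hp => (norm_fderiv_le_jetNorm f p).trans (hf.jetNorm_le p hp)) p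

lemma mono (hf : IsC1Bounded L c f) (hcc' : c ≤ c') : IsC1Bounded L c' f :=
  ⟨hf.contDiff, hf.eqOn_zero, fun p hp => (hf.jetNorm_le p hp).trans hcc'⟩

lemma zero (hc : 0 ≤ c) : IsC1Bounded L c fun _ => (0 : W) :=
  ⟨contDiff_const, fun _ _ => rfl, fun p _ => by simpa [jetNorm] using hc⟩

lemma neg (hf : IsC1Bounded L c f) : IsC1Bounded L c fun x => -f x :=
  ⟨hf.contDiff.neg, fun x hx => by simp [hf.eqOn_zero hx], fun p hp => by
    simpa [jetNorm, fderiv_fun_neg] using hf.jetNorm_le p hp⟩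

lemma add (hf : IsC1Bounded L c f) (hg : IsC1Bounded L c' g) :
    IsC1Bounded L (c + c') fun x => f x + g x :=
  ⟨hf.contDiff.add hg.contDiff, fun x hx => by simp [hf.eqOn_zero hx, hg.eqOn_zero hx],
    fun p hp => (jetNorm_add_le (hf.differentiable p) (hg.differentiable p)).trans
      (add_le_add (hf.jetNorm_le p hp) (hg.jetNorm_le p hp))⟩

lemma sub (hf : IsC1Bounded L c f) (hg : IsC1Bounded L c' g) :
    IsC1Bounded L (c + c') fun x => f x - g x := by
  simpa only [sub_eq_add_neg] using hf.add hg.neg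

lemma sum {ι : Type*} [Fintype ι] {f : ι → V → W} (hf : ∀ i, IsC1Bounded L c (f i)) :
    IsC1Bounded L (Fintype.card ι * c) fun x => ∑ i, f i x := by
  rw [← nsmul_eq_mul, Fintype.card, ← Finset.sum_const]
  induction (Finset.univ : Finset ι) using Finset.cons_induction with
  | empty => simpa using zero le_rfl
  | cons i s hi ih => simpa only [Finset.sum_cons] using (hf i).add ih

lemma clm_comp (hf : IsC1Bounded L c f) (A : W →L[ℝ] X) {a : ℝ} (hA : ‖A‖ ≤ a) :
    IsC1Bounded L (a * c) fun x => A (f x) :=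
  ⟨A.contDiff.comp hf.contDiff, fun x hx => by simp [hf.eqOn_zero hx], fun p hp =>
    (jetNorm_clm_comp_le A (hf.differentiable p)).trans (mul_le_mul hA (hf.jetNorm_le p hp)
      (jetNorm_nonneg _ _) ((norm_nonneg A).trans hA))⟩

lemma const_smul (hf : IsC1Bounded L c f) {a : ℝ} (ha : 0 ≤ a) :
    IsC1Bounded L (a * c) fun x => a • f x := by
  refine hf.clm_comp (a • .id ℝ W) ((norm_smul_le _ _).trans ?_)
  rw [Real.norm_of_nonneg ha]
  exact mul_le_of_le_one_right ha ContinuousLinearMap.norm_id_le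

lemma smul (hf : IsC1Bounded L c f) {χ : V → ℝ} (hχ : ContDiff ℝ ∞ χ)
    (hχL : ∀ p ∈ L, jetNorm χ p ≤ c') : IsC1Bounded L (2 * c' * c) fun x => χ x • f x := by
  refine ⟨hχ.smul hf.contDiff, fun x hx => by simp [hf.eqOn_zero hx], fun p hp => ?_⟩
  have hc' : 0 ≤ c' := (jetNorm_nonneg χ p).trans (hχL p hp)
  refine (jetNorm_smul_le (hχ.differentiable (by simp) p) (hf.differentiable p)).trans ?_
  gcongr
  exacts [jetNorm_nonneg _ _, hχL p hp, hf.jetNorm_le p hp]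

lemma prodMk (hf : IsC1Bounded L c f) {g : V → X} (hg : IsC1Bounded L c g) :
    IsC1Bounded L c fun x => (f x, g x) := by
  refine ⟨hf.contDiff.prodMk hg.contDiff,
    fun x hx => by simp [hf.eqOn_zero hx, hg.eqOn_zero hx], fun p hp => ?_⟩
  rw [jetNorm, (hf.differentiable p).fderiv_prodMk (hg.differentiable p),
    ContinuousLinearMap.opNorm_prod, Prod.norm_mk, Prod.norm_mk, max_max_max_comm]
  exact max_le (hf.jetNorm_le p hp) (hg.jetNorm_le p hp)

end IsC1Bounded

lemma exists_forall_jetNorm_le (hf : ContDiff ℝ ∞ f) {L : Set V} (hL : IsCompact L) :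
    ∃ M, 0 ≤ M ∧ ∀ p ∈ L, jetNorm f p ≤ M := by
  obtain ⟨M, hM⟩ := hL.bddAbove_image (continuous_jetNorm hf).continuousOn
  exact ⟨max M 0, le_max_right _ _, fun p hp => (hM (mem_image_of_mem _ hp)).trans
    (le_max_left _ _)⟩

lemma exists_pos_forall_norm_fderiv_smul_le (W : Type*) [NormedAddCommGroup W] [NormedSpace ℝ W]
    {L : Set V} (hL : IsCompact L) {χ : V → ℝ} (hχ : ContDiff ℝ ∞ χ) (hχL : EqOn χ 0 Lᶜ) :
    ∃ ε > 0, ∀ f : V → W, Differentiable ℝ f → (∀ p ∈ L, jetNorm f p ≤ ε) →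
      ∀ p, ‖fderiv ℝ (fun x => χ x • f x) p‖ ≤ 1 / 2 := by
  obtain ⟨M, hM, hχM⟩ := exists_forall_jetNorm_le hχ hL
  refine ⟨1 / (4 * (M + 1)), by positivity, fun f hf hfL => norm_fderiv_le_of_eqOn_zero
    hL.isClosed (by norm_num) (fun x hx => by simp [hχL hx]) fun p hp => ?_⟩
  calc ‖fderiv ℝ (fun x => χ x • f x) p‖
      ≤ jetNorm (fun x => χ x • f x) p := norm_fderiv_le_jetNorm _ _
    _ ≤ 2 * jetNorm χ p * jetNorm f p := jetNorm_smul_le (hχ.differentiable (by simp) p) (hf p)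
    _ ≤ 2 * (M + 1) * (1 / (4 * (M + 1))) := by
        gcongr
        exacts [jetNorm_nonneg _ _, (hχM p hp).trans (by simp), hfL p hp]
    _ = 1 / 2 := by field_simp; norm_num

end JetNorm

section Fragmentation

variable {V : Type*} [NormedAddCommGroup V] [NormedSpace ℝ V]

lemma IsC1Family.continuous_jetNorm_sub_id {T : Type*} [TopologicalSpace T]
    {F : T → Equiv.Perm V} (hF : IsC1Family F) :
    Continuous fun q : T × V => jetNorm (fun x => F q.1 x - x) q.2 := by
  have hfderiv : ∀ q : T × V, fderiv ℝ (fun x => F q.1 x - x) q.2 =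
      fderiv ℝ (F q.1) q.2 - .id ℝ V := fun q =>
    ((hF.differentiable q.1 q.2).hasFDerivAt.sub (hasFDerivAt_id q.2)).fderiv
  simp only [jetNorm, hfderiv]
  exact (hF.continuous.sub continuous_snd).norm.max
    (hF.continuous_fderiv.sub continuous_const).norm

lemma IsC1Family.exists_subdivision [CompleteSpace V] {F : unitInterval → Equiv.Perm V}
    (hF : IsC1Family F) {L : Set V} (hL : IsCompact L) {ε : ℝ} (hε : 0 < ε) :
    ∃ τ : ℕ → unitInterval, τ 0 = 0 ∧ Monotone τ ∧ (∃ N, τ N = 1) ∧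
      ∀ k, ∀ s ∈ Icc (τ k) (τ (k + 1)), ∀ r ∈ Icc (τ k) (τ (k + 1)), ∀ p ∈ L,
        jetNorm (fun x => (F s * (F r)⁻¹) x - x) p < ε := by
  have hG : IsC1Family fun q : unitInterval × unitInterval => F q.1 * (F q.2)⁻¹ :=
    (hF.comp continuous_fst).mul (hF.comp continuous_snd).inv
  have hdiag : ∀ t, ∀ᶠ q : unitInterval × unitInterval in 𝓝 (t, t), ∀ p ∈ L,
      jetNorm (fun x => (F q.1 * (F q.2)⁻¹) x - x) p < ε := fun t =>
    hL.eventually_forall_of_forall_eventually fun p _ =>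
      hG.continuous_jetNorm_sub_id.continuousAt.eventually_lt_const (by simpa [jetNorm] using hε)
  simp only [Filter.Eventually, mem_nhds_prod_iff'] at hdiag
  choose u v hu htu hv htv huv using hdiag
  obtain ⟨τ, hτ₀, hτ, ⟨N, hN⟩, hτu⟩ := exists_monotone_Icc_subset_open_cover_unitInterval
    (c := fun t => u t ∩ v t) (fun t => (hu t).inter (hv t))
    fun t _ => mem_iUnion.2 ⟨t, htu t, htv t⟩
  refine ⟨τ, hτ₀, hτ, ⟨N, hN N le_rfl⟩, fun k s hs r hr => ?_⟩
  obtain ⟨t, ht⟩ := hτu k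
  exact huv t (mk_mem_prod (ht hs).1 (ht hr).2)

variable [FiniteDimensional ℝ V]

lemma exists_contDiff_eqOn_one_eqOn_zero_compl {K U : Set V} (hK : IsClosed K) (hU : IsOpen U)
    (hKU : K ⊆ U) : ∃ χ : V → ℝ, ContDiff ℝ ∞ χ ∧ EqOn χ 1 K ∧ EqOn χ 0 Uᶜ := by
  obtain ⟨χ, hχ₀, hχ₁, -⟩ := exists_contMDiffMap_zero_one_of_isClosed (n := ⊤)
    (modelWithCornersSelf ℝ V) hU.isClosed_compl hK (disjoint_compl_left_iff_subset.2 hKU)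
  exact ⟨χ, χ.contMDiff.contDiff, hχ₁, hχ₀⟩

lemma IsC1Family.exists_cutoff_increment {F : unitInterval → Equiv.Perm V} (hF : IsC1Family F)
    {χ : V → ℝ} (hχ : ContDiff ℝ ∞ χ) {a b : unitInterval} (hab : a ≤ b)
    (hFχ : ∀ s ∈ Icc a b, ∀ p, ‖fderiv ℝ (fun x => χ x • ((F s * (F a)⁻¹) x - x)) p‖ ≤ 1 / 2) :
    ∃ G : unitInterval → Equiv.Perm V, IsC1Family G ∧ G 0 = 1 ∧ (∀ t p, χ p = 0 → G t p = p) ∧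
      ∀ t p, χ (F (min t a) p) = 1 → G t (F (min t a) p) = F (min t b) p := by
  have := FiniteDimensional.complete ℝ V
  have hmem : ∀ t, max a (min t b) ∈ Icc a b := fun t =>
    ⟨le_max_left _ _, max_le hab (min_le_right _ _)⟩
  have hFab : IsC1Family fun t => F (max a (min t b)) * (F a)⁻¹ :=
    (hF.comp (continuous_const.max (continuous_id.min continuous_const))).mul
      (const (inv_mem (hF.mem a)))
  obtain ⟨G, hG, hGF⟩ := hFab.exists_cutoff hχ fun t => hFχ _ (hmem t)
  have hGa : ∀ t ≤ a, ∀ p, G t p = p := fun t ht p => by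
    simp [hGF, min_eq_left (ht.trans hab), max_eq_left ht]
  refine ⟨G, hG, Equiv.ext (hGa 0 bot_le), fun t p hp => by simp [hGF, hp], fun t p hp => ?_⟩
  obtain ht | ht := le_total t a
  · rw [hGa t ht, min_eq_left ht, min_eq_left (ht.trans hab)]
  · rw [min_eq_right ht] at hp ⊢
    simp [hGF, hp, max_eq_right (le_min ht hab)]

lemma IsC1Family.exists_eqOn_compact {F : unitInterval → Equiv.Perm V} (hF : IsC1Family F)
    (hF₀ : F 0 = 1) {K U : Set V} (hK : IsCompact K) (hU : IsOpen U)
    (hFKU : ∀ t, MapsTo (F t) K U) :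
    ∃ B : unitInterval → Equiv.Perm V, IsC1Family B ∧ B 0 = 1 ∧ (∀ t, EqOn (B t) (F t) K) ∧
      ∃ L, IsCompact L ∧ L ⊆ U ∧ ∀ t, EqOn (B t) id Lᶜ := by
  have := FiniteDimensional.complete ℝ V
  have := FiniteDimensional.proper_real V
  obtain ⟨M, hM, hFM, hMU⟩ : ∃ M, IsCompact M ∧ (∀ t, MapsTo (F t) K M) ∧ M ⊆ U :=
    ⟨_, (isCompact_univ.prod hK).image hF.continuous,
      fun t p hp => ⟨(t, p), ⟨mem_univ t, hp⟩, rfl⟩,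
      image_subset_iff.2 fun q hq => hFKU q.1 hq.2⟩
  obtain ⟨L, hL, hML, hLU⟩ := exists_compact_between hM hU hMU
  obtain ⟨χ, hχ, hχM, hχL⟩ :=
    exists_contDiff_eqOn_one_eqOn_zero_compl hM.isClosed isOpen_interior hML
  replace hχL : EqOn χ 0 Lᶜ := hχL.mono (compl_subset_compl.2 interior_subset)
  obtain ⟨ε, hε, hχε⟩ := exists_pos_forall_norm_fderiv_smul_le V hL hχ hχL
  obtain ⟨τ, hτ₀, hτ, ⟨N, hN⟩, hτε⟩ := hF.exists_subdivision hL hε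
  suffices h : ∀ k, ∃ B : unitInterval → Equiv.Perm V, IsC1Family B ∧ B 0 = 1 ∧
      (∀ t, EqOn (B t) (F (min t (τ k))) K) ∧ ∀ t, EqOn (B t) id Lᶜ by
    obtain ⟨B, hB, hB₀, hBF, hBL⟩ := h N
    refine ⟨B, hB, hB₀, fun t => ?_, L, hL, hLU, hBL⟩
    simpa [hN, min_eq_left unitInterval.le_one'] using hBF t
  intro k
  induction k with
  | zero => exact ⟨1, const (one_mem _), rfl, fun t p _ => by simp [hτ₀, hF₀], fun t p _ => rfl⟩
  | succ k ih =>
    obtain ⟨B, hB, hB₀, hBF, hBL⟩ := ih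
    have hk : τ k ≤ τ (k + 1) := hτ k.le_succ
    obtain ⟨G, hG, hG₀, hGL, hGF⟩ := hF.exists_cutoff_increment hχ hk fun s hs =>
      hχε _ (((hF.differentiable s).comp
        (hF.inv.differentiable (τ k))).sub differentiable_id) fun p hp =>
          (hτε k s hs _ (left_mem_Icc.2 hk) p hp).le
    refine ⟨_, hG.mul hB, by simp [hG₀, hB₀], fun t p hp => ?_, fun t p hp => ?_⟩
    · rw [Equiv.Perm.mul_apply, hBF t hp]
      exact hGF t p (hχM (hFM _ hp))
    · rw [Equiv.Perm.mul_apply, hBL t hp]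
      exact hGL t p (hχL hp)

end Fragmentation

section NullIsotopy

variable {n : ℕ}

lemma α₀_smul (p v : E n) (c : ℝ) : α₀ n p (c • v) = c * α₀ n p v := by
  simp [α₀, mul_add, Finset.mul_sum, mul_left_comm]

lemma α₀_zero (p : E n) : α₀ n p 0 = 0 := by simp [α₀]

/-- A smooth path of diffeomorphisms, parametrized by the whole line, whose tracks are tangent to
the contact planes `ker α₀`. -/
structure IsNullIsotopy (g : ℝ → Equiv.Perm (E n)) : Prop where
  contDiff : ContDiff ℝ ∞ fun q : ℝ × E n => g q.1 q.2
  mem : ∀ t, g t ∈ diffeoGroup (E n)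
  null : ∀ t p, α₀ n (g t p) (deriv (fun s => g s p) t) = 0

namespace IsNullIsotopy

variable {g : ℝ → Equiv.Perm (E n)}

lemma one : IsNullIsotopy fun _ => (1 : Equiv.Perm (E n)) :=
  ⟨contDiff_snd, fun _ => one_mem _, fun t p => by simp [α₀_zero]⟩

lemma comp (hg : IsNullIsotopy g) {c : ℝ → ℝ} (hc : ContDiff ℝ ∞ c) :
    IsNullIsotopy fun t => g (c t) := by
  refine ⟨hg.contDiff.comp ((hc.comp contDiff_fst).prodMk contDiff_snd), fun t => hg.mem _,
    fun t p => ?_⟩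
  have hgp : ContDiff ℝ ∞ fun s => g s p := hg.contDiff.comp (contDiff_id.prodMk contDiff_const)
  have hderiv : deriv (fun s => g (c s) p) t = deriv c t • deriv (fun s => g s p) (c t) :=
    deriv.scomp t (hgp.differentiable (by simp) _) (hc.differentiable (by simp) t)
  rw [hderiv, α₀_smul, hg.null, mul_zero]

lemma mul_right (hg : IsNullIsotopy g) {σ : Equiv.Perm (E n)} (hσ : σ ∈ diffeoGroup (E n)) :
    IsNullIsotopy fun t => g t * σ :=
  ⟨hg.contDiff.comp (contDiff_fst.prodMk (hσ.1.comp contDiff_snd)),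
    fun t => mul_mem (hg.mem t) hσ, fun t p => hg.null t (σ p)⟩

lemma of_eventuallyEq (h : ∀ t p, ∃ g' : ℝ → Equiv.Perm (E n), IsNullIsotopy g' ∧
    ∀ᶠ q : ℝ × E n in 𝓝 (t, p), g q.1 q.2 = g' q.1 q.2) : IsNullIsotopy g := by
  refine ⟨contDiff_iff_contDiffAt.2 fun ⟨t, p⟩ => ?_,
    fun t => mem_diffeoGroup_of_eventuallyEq fun p => ?_, fun t p => ?_⟩
  all_goals obtain ⟨g', hg', hgg'⟩ := h t p
  · exact hg'.contDiff.contDiffAt.congr_of_eventuallyEq hgg'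
  · exact ⟨g' t, hg'.mem t, (Continuous.prodMk_right t).continuousAt.eventually hgg'⟩
  · have htime : (fun s => g s p) =ᶠ[𝓝 t] fun s => g' s p :=
      (Continuous.prodMk_left p).continuousAt.eventually hgg'
    rw [htime.deriv_eq, htime.eq_of_nhds, hg'.null]

end IsNullIsotopy

/-- The diffeomorphisms that can be reached from the identity by a null isotopy supported in `L`.
The isotopy is stationary outside `[0, 1]`, so that isotopies can be concatenated smoothly. -/
def nullReachable (L : Set (E n)) : Submonoid (Equiv.Perm (E n)) where
  carrier := {σ | ∃ g : ℝ → Equiv.Perm (E n), IsNullIsotopy g ∧ (∀ t ≤ 0, g t = 1) ∧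
    (∀ t, 1 ≤ t → g t = σ) ∧ ∀ t, EqOn (g t) id Lᶜ}
  one_mem' := ⟨_, .one, fun _ _ => rfl, fun _ _ => rfl, fun _ _ _ => rfl⟩
  mul_mem' := by
    rintro σ σ' ⟨g, hg, hg₀, hg₁, hgL⟩ ⟨g', hg', hg'₀, hg'₁, hg'L⟩
    have hσ' : σ' ∈ diffeoGroup (E n) := hg'₁ 1 le_rfl ▸ hg'.mem 1
    refine ⟨fun t => g (3 * t - 2) * g' (3 * t), .of_eventuallyEq fun t p => ?_, fun t ht => ?_,
      fun t ht => ?_, fun t p hp => ?_⟩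
    · obtain ht | ht : t < 2 / 3 ∨ 1 / 3 < t := by
        by_contra! h
        linarith [h.1, h.2]
      · refine ⟨_, hg'.comp (c := fun t => 3 * t) (by fun_prop), ?_⟩
        filter_upwards [continuousAt_fst.eventually_lt_const ht] with q hq
        rw [hg₀ _ (by linarith), one_mul]
      · refine ⟨_, (hg.comp (c := fun t => 3 * t - 2) (by fun_prop)).mul_right hσ', ?_⟩
        filter_upwards [continuousAt_fst.eventually_const_lt ht] with q hq
        rw [hg'₁ _ (by linarith)]
    · beta_reduce
      rw [hg₀ _ (by linarith), hg'₀ _ (by linarith), one_mul]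
    · beta_reduce
      rw [hg₁ _ (by linarith), hg'₁ _ (by linarith)]
    · rw [Equiv.Perm.mul_apply, hg'L _ hp]
      exact hgL _ hp

lemma isNullIsotopy_of_eq_id_add {w u : E n → E n} (hw : ContDiff ℝ ∞ w) (hu : ContDiff ℝ ∞ u)
    (hnull : ∀ p (c : ℝ), α₀ n (p + (w p + c • u p)) (u p) = 0) {φ : ℝ → ℝ}
    (hφ : ContDiff ℝ ∞ φ) {g : ℝ → Equiv.Perm (E n)} (hg : ∀ t, g t ∈ diffeoGroup (E n))
    (hgw : ∀ t p, g t p = p + (w p + φ t • u p)) : IsNullIsotopy g := by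
  refine ⟨?_, hg, fun t p => ?_⟩
  · simp only [hgw]
    exact contDiff_snd.add ((hw.comp contDiff_snd).add
      ((hφ.comp contDiff_fst).smul (hu.comp contDiff_snd)))
  · have hderiv : HasDerivAt (fun s => g s p) (deriv φ t • u p) t := by
      simp only [hgw]
      exact (((hφ.differentiable (by simp) t).hasDerivAt.smul_const _).const_add _).const_add _
    rw [hderiv.deriv, α₀_smul, hgw, hnull, mul_zero]

lemma mul_inv_mem_nullReachable {L : Set (E n)} (hL : IsClosed L) {w w' : E n → E n}
    (hw : IsC1Bounded L (1 / 2) w) (hw' : IsC1Bounded L (1 / 2) w')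
    (hnull : ∀ p (c : ℝ), α₀ n (p + (w p + c • (w' p - w p))) (w' p - w p) = 0)
    {σ σ' : Equiv.Perm (E n)} (hσ : σ ∈ diffeoGroup (E n)) (hσw : ∀ p, σ p = p + w p)
    (hσw' : ∀ p, σ' p = p + w' p) : σ' * σ⁻¹ ∈ nullReachable L := by
  let φ := Real.smoothTransition
  have hu : ContDiff ℝ ∞ fun p => w' p - w p := hw'.contDiff.sub hw.contDiff
  have hb : ∀ t p, ‖fderiv ℝ (fun x => w x + φ t • (w' x - w x)) p‖ ≤ 1 / 2 := fun t p => by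
    have hd := (hw.differentiable p).hasFDerivAt
    have hd' := (hw'.differentiable p).hasFDerivAt
    have hdt : HasFDerivAt (fun x => w x + φ t • (w' x - w x))
        (fderiv ℝ w p + φ t • (fderiv ℝ w' p - fderiv ℝ w p)) p :=
      hd.add ((hd'.sub hd).const_smul (φ t))
    have hwp := mem_closedBall_zero_iff.2 (hw.norm_fderiv_le hL (by norm_num) p)
    have hw'p := mem_closedBall_zero_iff.2 (hw'.norm_fderiv_le hL (by norm_num) p)
    rw [hdt.fderiv, ← mem_closedBall_zero_iff]
    exact (convex_closedBall _ _).add_smul_sub_mem hwp hw'p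
      ⟨Real.smoothTransition.nonneg t, Real.smoothTransition.le_one t⟩
  choose g hg hgw using fun t => exists_mem_diffeoGroup_eq_id_add (c := 1 / 2)
    (hw.contDiff.add (hu.const_smul (φ t))) (by norm_num) (by simpa using hb t)
  refine ⟨_, (isNullIsotopy_of_eq_id_add hw.contDiff hu hnull Real.smoothTransition.contDiff hg
    hgw).mul_right (inv_mem hσ), fun t ht => ?_, fun t ht => ?_, fun t p hp => ?_⟩
  · have : g t = σ := Equiv.ext fun p => by
      simp [hgw, hσw, φ, Real.smoothTransition.zero_of_nonpos ht]
    rw [this, mul_inv_cancel]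
  · have : g t = σ' := Equiv.ext fun p => by
      simp [hgw, hσw', φ, Real.smoothTransition.one_of_one_le ht]
    rw [this]
  · have hσp : σ⁻¹ p = p := Equiv.Perm.inv_eq_iff_eq.2 (by simp [hσw, hw.eqOn_zero hp])
    rw [Equiv.Perm.mul_apply, hσp, hgw]
    simp [hw.eqOn_zero hp, hw'.eqOn_zero hp]

end NullIsotopy

section NullMoves

variable {n : ℕ} {L : Set (E n)}

lemma mem_nullReachable_of_null_step (hL : IsClosed L) {w w' : E n → E n}
    (hw : IsC1Bounded L (1 / 2) w) (hw' : IsC1Bounded L (1 / 2) w')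
    (hnull : ∀ p (c : ℝ), α₀ n (p + (w p + c • (w' p - w p))) (w' p - w p) = 0)
    (h : ∀ σ : Equiv.Perm (E n), (∀ p, σ p = p + w p) → σ ∈ nullReachable L)
    (σ' : Equiv.Perm (E n)) (hσ' : ∀ p, σ' p = p + w' p) : σ' ∈ nullReachable L := by
  obtain ⟨σ, hσ, hσw⟩ := exists_mem_diffeoGroup_eq_id_add (c := 1 / 2) hw.contDiff
    (by norm_num) (by simpa using hw.norm_fderiv_le hL (by norm_num))
  rw [← inv_mul_cancel_right σ' σ]
  exact mul_mem (mul_inv_mem_nullReachable hL hw hw' hnull hσ hσw hσ') (h σ hσw)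

/-- The four moves push first the `x`-coordinates to `x + v_x - θ eᵢ`, then `(yᵢ, z)`, then the
remaining `θ eᵢ`, and finally `(y, z)`. The second move changes `yᵢ` by `b` at a place where `xᵢ`
differs by `θ` from its final value, so that it picks up exactly the `z`-displacement `θ b` that the
last move cannot realise. -/
lemma mem_nullReachable_of_four_moves (hL : IsClosed L) (i : Fin n) {v : E n → E n}
    {θ b ζ : E n → ℝ} (hv : IsC1Bounded L (1 / 4) v) (hθ : IsC1Bounded L (1 / 4) θ)
    (hb : IsC1Bounded L (1 / 2) b)
    (hζ : IsC1Bounded L (1 / 2) ζ) (hθb : ∀ p, θ p * b p = α₀ n (p + v p) (v p))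
    (hζb : ∀ p, ζ p = α₀ n (p + v p) (v p) - (p + v p).1 i * b p) {σ : Equiv.Perm (E n)}
    (hσ : ∀ p, σ p = p + v p) : σ ∈ nullReachable L := by
  have hsingle : ‖ContinuousLinearMap.single ℝ (fun _ : Fin n => ℝ) i‖ ≤ 1 :=
    ContinuousLinearMap.opNorm_le_bound _ zero_le_one fun a => by simp [Pi.norm_single]
  have hvx := hv.clm_comp (.fst ℝ _ _) (ContinuousLinearMap.norm_fst_le _ _ _)
  have hbe : IsC1Bounded L (1 / 2) fun p => (Pi.single i (b p) : Fin n → ℝ) := by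
    simpa using hb.clm_comp _ hsingle
  have hvθ : IsC1Bounded L (1 / 2) fun p => (v p).1 - Pi.single i (θ p) :=
    (hvx.sub (hθ.clm_comp _ hsingle)).mono (by norm_num)
  have hw₀ : IsC1Bounded L (1 / 2) fun _ => (0 : E n) := .zero (by norm_num)
  have hw₁ : IsC1Bounded L (1 / 2) fun p => ((v p).1 - Pi.single i (θ p), (0 : (Fin n → ℝ) × ℝ)) :=
    hvθ.prodMk (.zero (by norm_num))
  have hw₂ : IsC1Bounded L (1 / 2) fun p =>
      ((v p).1 - Pi.single i (θ p), (Pi.single i (b p) : Fin n → ℝ), ζ p) :=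
    hvθ.prodMk (hbe.prodMk hζ)
  have hw₃ : IsC1Bounded L (1 / 2) fun p => ((v p).1, (Pi.single i (b p) : Fin n → ℝ), ζ p) :=
    (hvx.mono (by norm_num)).prodMk (hbe.prodMk hζ)
  have hw₄ : IsC1Bounded L (1 / 2) v := hv.mono (by norm_num)
  refine mem_nullReachable_of_null_step hL hw₃ hw₄ (fun p c => ?_) (mem_nullReachable_of_null_step
    hL hw₂ hw₃ (fun p c => ?_) (mem_nullReachable_of_null_step hL hw₁ hw₂ (fun p c => ?_)
      (mem_nullReachable_of_null_step hL hw₀ hw₁ (fun p c => ?_) fun τ hτ => ?_))) σ hσ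
  · simp only [α₀, hζb, Prod.fst_add, Pi.add_apply, Prod.snd_sub, Prod.smul_fst, Prod.fst_sub,
      sub_self, smul_zero, add_zero, Pi.sub_apply, Pi.single_apply, mul_sub, mul_ite, mul_zero,
      Finset.sum_sub_distrib, Finset.sum_ite_eq', Finset.mem_univ, if_true]
    ring
  · simp [α₀]
  · have hθbp := hθb p
    simp only [α₀, hζb, Prod.fst_add, Pi.add_apply, Prod.mk_sub_mk, sub_self, sub_zero,
      Prod.smul_mk, smul_zero, smul_eq_mul, Prod.mk_add_mk, add_zero, zero_add, Pi.sub_apply,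
      Pi.single_apply, mul_ite, mul_zero, Finset.sum_ite_eq', Finset.mem_univ, if_true] at hθbp ⊢
    linear_combination -hθbp
  · simp [α₀]
  · have : τ = 1 := Equiv.ext fun p => by simp [hτ]
    exact this ▸ one_mem _

lemma jetNorm_add_apply_le {v : E n → E n} {ε M : ℝ} (hv : IsC1Bounded L ε v) {p : E n}
    (hp : p ∈ L) (hM : jetNorm id p ≤ M) (i : Fin n) :
    jetNorm (fun x => (x + v x).1 i) p ≤ M + ε := by
  let A : E n →L[ℝ] ℝ := .comp (.proj i) (.fst ℝ _ _)
  have hA : ‖A‖ ≤ 1 := A.opNorm_le_bound zero_le_one fun x => by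
    simpa [A] using (norm_le_pi_norm x.1 i).trans (norm_fst_le x)
  calc jetNorm (fun x => A (x + v x)) p
      ≤ ‖A‖ * jetNorm (fun x => x + v x) p :=
        jetNorm_clm_comp_le A (differentiableAt_id.add (hv.differentiable p))
    _ ≤ 1 * (jetNorm id p + jetNorm v p) :=
        mul_le_mul hA (jetNorm_add_le differentiableAt_id (hv.differentiable p))
          (jetNorm_nonneg _ _) zero_le_one
    _ ≤ M + ε := by
        rw [one_mul]
        exact add_le_add hM (hv.jetNorm_le p hp)

lemma IsC1Bounded.α₀_id_add {v : E n → E n} {ε M : ℝ} (hv : IsC1Bounded L ε v)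
    (hM : ∀ p ∈ L, ∀ i, jetNorm (fun x => (x + v x).1 i) p ≤ M) :
    IsC1Bounded L ((1 + n * (2 * M)) * ε) fun p => α₀ n (p + v p) (v p) := by
  have hX : ∀ i, ContDiff ℝ ∞ fun x => (x + v x).1 i := fun i =>
    contDiff_pi.1 (contDiff_id.add hv.contDiff).fst i
  have hv₂ := hv.clm_comp (.snd ℝ _ _) (ContinuousLinearMap.norm_snd_le _ _ _)
  have hvz := hv₂.clm_comp (.snd ℝ _ _) (ContinuousLinearMap.norm_snd_le _ _ _)
  have hvy : ∀ i, IsC1Bounded L ε fun x => (v x).2.1 i := fun i => by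
    have hproj : ‖(.proj i : (Fin n → ℝ) →L[ℝ] ℝ)‖ ≤ 1 :=
      ContinuousLinearMap.opNorm_le_bound _ zero_le_one fun x => by simpa using norm_le_pi_norm x i
    simpa using (hv₂.clm_comp (.fst ℝ _ _) (ContinuousLinearMap.norm_fst_le _ _ _)).clm_comp
      (.proj i) hproj
  exact (hvz.add (.sum fun i => (hvy i).smul (hX i) fun p hp => hM p hp i)).mono
    (by simp; linarith)

lemma exists_pos_forall_mem_nullReachable (i : Fin n) {K : Set (E n)} (hK : IsClosed K)
    (hL : IsCompact L) (hKL : K ⊆ interior L) : ∃ ε > 0, ∀ σ ∈ diffeoGroup (E n),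
      EqOn σ id Kᶜ → (∀ p ∈ L, jetNorm (fun x => σ x - x) p ≤ ε) → σ ∈ nullReachable L := by
  obtain ⟨χ, hχ, hχK, hχL⟩ :=
    exists_contDiff_eqOn_one_eqOn_zero_compl hK isOpen_interior hKL
  replace hχL : EqOn χ 0 Lᶜ := hχL.mono (compl_subset_compl.2 interior_subset)
  obtain ⟨M, hM, hχM⟩ := exists_forall_jetNorm_le hχ hL
  obtain ⟨N, hN, hidN⟩ := exists_forall_jetNorm_le (contDiff_id (E := E n)) hL
  obtain ⟨c, hc, hc₁, hcM⟩ : ∃ c > 0, c ≤ 1 / 4 ∧ c * M ≤ 1 / 4 :=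
    ⟨1 / (4 * (M + 1)), by positivity, by bound, by field_simp; linarith⟩
  obtain ⟨δ, hδ, hδ₁, hδN⟩ : ∃ δ > 0, δ ≤ 1 / 8 ∧ 2 * (N + 1) * δ = 1 / 4 :=
    ⟨1 / (8 * (N + 1)), by positivity, by bound, by field_simp; norm_num⟩
  obtain ⟨ε, hε, hε₁, hεδ⟩ : ∃ ε > 0, ε ≤ 1 / 4 ∧ (1 + n * (2 * (N + 1))) * ε = c * δ :=
    ⟨c * δ / (1 + n * (2 * (N + 1))), by positivity, by
      rw [div_le_iff₀ (by positivity)]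
      have hnN : 0 ≤ n * (2 * (N + 1)) := by positivity
      nlinarith, by field_simp⟩
  refine ⟨ε, hε, fun σ hσ hσK hσε => ?_⟩
  have hKL' : Lᶜ ⊆ Kᶜ := compl_subset_compl.2 (hKL.trans interior_subset)
  have hv : IsC1Bounded L ε fun p => σ p - p :=
    ⟨hσ.1.sub contDiff_id, fun p hp => by simp [hσK (hKL' hp)], hσε⟩
  have hX : ∀ p ∈ L, ∀ j, jetNorm (fun x => (x + (σ x - x)).1 j) p ≤ N + 1 := fun p hp j =>
    (jetNorm_add_apply_le hv hp (hidN p hp) j).trans (by linarith)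
  have hβ := hv.α₀_id_add hX
  rw [hεδ] at hβ
  have hθ := (IsC1Bounded.mk hχ hχL hχM).const_smul hc.le
  have hb := hβ.const_smul (inv_nonneg.2 hc.le)
  have hXb := hb.smul (contDiff_pi.1 (contDiff_id.add hv.contDiff).fst i) fun p hp => hX p hp i
  rw [inv_mul_cancel_left₀ hc.ne'] at hb hXb
  refine mem_nullReachable_of_four_moves hL.isClosed i (hv.mono hε₁) (hθ.mono hcM)
    (hb.mono (by linarith)) ((hβ.sub hXb).mono ?_) (fun p => ?_) (fun p => rfl) (by simp)
  · rw [hδN]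
    nlinarith
  · by_cases hp : p ∈ K
    · simp [hχK hp, hc.ne']
    · simp [hσK hp, α₀_zero]

lemma mem_nullReachable_of_isC1Family (i : Fin n) {F : unitInterval → Equiv.Perm (E n)}
    (hF : IsC1Family F) (hF₀ : F 0 = 1) {K : Set (E n)} (hK : IsClosed K) (hL : IsCompact L)
    (hKL : K ⊆ interior L) (hFK : ∀ t, EqOn (F t) id Kᶜ) : F 1 ∈ nullReachable L := by
  obtain ⟨ε, hε, hεL⟩ := exists_pos_forall_mem_nullReachable i hK hL hKL
  obtain ⟨τ, hτ₀, hτ, ⟨N, hN⟩, hτε⟩ := hF.exists_subdivision hL hε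
  suffices h : ∀ k, F (τ k) ∈ nullReachable L from hN ▸ h N
  intro k
  induction k with
  | zero => exact hτ₀ ▸ hF₀ ▸ one_mem _
  | succ k ih =>
    have hk : τ k ≤ τ (k + 1) := hτ k.le_succ
    rw [← inv_mul_cancel_right (F (τ (k + 1))) (F (τ k))]
    refine mul_mem (hεL _ (mul_mem (hF.mem _) (inv_mem (hF.mem _))) (fun p hp => ?_) fun p hp =>
      (hτε k _ (right_mem_Icc.2 hk) _ (left_mem_Icc.2 hk) p hp).le) ih
    rw [Equiv.Perm.mul_apply, eqOn_inv_id (hFK _) hp]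
    exact hFK _ hp

end NullMoves

section Gluing

variable {X ι T : Type*}

lemma exists_perm_eqOn_of_pairwise_disjoint {L : ι → Set X} (hL : Pairwise (Disjoint on L))
    {σ : ι → Equiv.Perm X} (hσ : ∀ k, EqOn (σ k) id (L k)ᶜ) :
    ∃ τ : Equiv.Perm X, (∀ k, EqOn τ (σ k) (L k)) ∧ EqOn τ id (⋃ k, L k)ᶜ := by
  classical
  let Φ : X → Equiv.Perm X := fun p => if h : ∃ k, p ∈ L k then σ h.choose else 1
  have hΦL : ∀ k, ∀ p ∈ L k, Φ p = σ k := fun k p hp => by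
    have h : ∃ k, p ∈ L k := ⟨k, hp⟩
    have hk : h.choose = k := by_contra fun hne =>
      disjoint_left.1 (hL hne) h.choose_spec hp
    simp only [Φ, dif_pos h, hk]
  have hΦ : ∀ p ∉ ⋃ k, L k, Φ p = 1 := fun p hp => dif_neg (by simpa using hp)
  have hmaps : ∀ k (ρ : Equiv.Perm X), EqOn ρ id (L k)ᶜ → ∀ p ∈ L k, ρ p ∈ L k :=
    fun k ρ hρ p hp => by_contra fun h => h (by rwa [ρ.injective (hρ h)])
  have hmaps' : ∀ p, Φ (Φ p p) = Φ p ∧ Φ ((Φ p)⁻¹ p) = Φ p := fun p => by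
    by_cases hp : p ∈ ⋃ k, L k
    · obtain ⟨k, hk⟩ := mem_iUnion.1 hp
      rw [hΦL k p hk]
      exact ⟨hΦL k _ (hmaps k _ (hσ k) p hk), hΦL k _ (hmaps k _ (eqOn_inv_id (hσ k)) p hk)⟩
    · simp [hΦ p hp]
  refine ⟨⟨fun p => Φ p p, fun p => (Φ p)⁻¹ p, fun p => ?_, fun p => ?_⟩, fun k p hp => ?_,
    fun p hp => ?_⟩
  · simp [(hmaps' p).1]
  · simp only [(hmaps' p).2]
    exact (Φ p).apply_symm_apply p
  · exact DFunLike.congr_fun (hΦL k p hp) p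
  · exact DFunLike.congr_fun (hΦ p hp) p

variable [TopologicalSpace X] {U L : ι → Set X}

/-- The sets `L k` are closed and enclosed in pairwise disjoint open sets `U k` forming a locally
finite family, so that maps supported in the `L k` can be put together. -/
structure IsSeparated (U L : ι → Set X) : Prop where
  isOpen : ∀ k, IsOpen (U k)
  disjoint : Pairwise (Disjoint on U)
  locallyFinite : LocallyFinite U
  isClosed : ∀ k, IsClosed (L k)
  subset : ∀ k, L k ⊆ U k

namespace IsSeparated

lemma eq_of_mem (h : IsSeparated U L) {j k : ι} {p : X} (hj : p ∈ U j) (hk : p ∈ U k) : j = k :=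
  by_contra fun hne => disjoint_left.1 (h.disjoint hne) hj hk

lemma exists_mem_nhds_or (h : IsSeparated U L) (p : X) :
    (∃ k, U k ∈ 𝓝 p) ∨ (⋃ k, L k)ᶜ ∈ 𝓝 p := by
  by_cases hp : p ∈ ⋃ k, L k
  · obtain ⟨k, hk⟩ := mem_iUnion.1 hp
    exact .inl ⟨k, (h.isOpen k).mem_nhds (h.subset k hk)⟩
  · exact .inr (((h.locallyFinite.subset h.subset).isClosed_iUnion h.isClosed).isOpen_compl.mem_nhds
      hp)

lemma exists_glue (h : IsSeparated U L) {Φ : ι → T → Equiv.Perm X}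
    (hΦ : ∀ k t, EqOn (Φ k t) id (L k)ᶜ) : ∃ F : T → Equiv.Perm X,
      (∀ k t, EqOn (F t) (Φ k t) (U k)) ∧ ∀ t, EqOn (F t) id (⋃ k, L k)ᶜ := by
  choose F hFΦ hF using fun t => exists_perm_eqOn_of_pairwise_disjoint
    (fun j k hjk => (h.disjoint hjk).mono (h.subset j) (h.subset k)) fun k => hΦ k t
  refine ⟨F, fun k t p hp => ?_, hF⟩
  by_cases hpL : p ∈ L k
  · exact hFΦ t k hpL
  · rw [hΦ k t hpL, hF t]
    simp only [mem_compl_iff, mem_iUnion, not_exists]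
    intro j hj
    exact hpL (h.eq_of_mem hp (h.subset j hj) ▸ hj)

lemma apply_mem_iff (h : IsSeparated U L) {F : unitInterval → Equiv.Perm X}
    (hF : ∀ p, Continuous fun t => F t p) (hF₀ : F 0 = 1)
    (hFL : ∀ t, EqOn (F t) id (⋃ k, L k)ᶜ) (t : unitInterval) (k : ι) (p : X) :
    F t p ∈ U k ↔ p ∈ U k := by
  have hU : ∀ j, p ∈ U j → F t p ∈ U j := fun j hj => by
    by_cases hp : p ∈ ⋃ k, L k
    · have hrange : range (fun s => F s p) ⊆ U j ∪ ⋃ (l) (_ : l ≠ j), U l := by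
        rintro _ ⟨s, rfl⟩
        obtain ⟨l, hl⟩ := mem_iUnion.1 <| by_contra fun hs =>
          hs (by rwa [(F s).injective (hFL s hs)] : F s p ∈ ⋃ k, L k)
        obtain rfl | hlj := eq_or_ne l j
        · exact .inl (h.subset l hl)
        · exact .inr (mem_biUnion hlj (h.subset l hl))
      refine (isPreconnected_range (hF p)).subset_left_of_subset_union (h.isOpen j)
        (isOpen_biUnion fun l _ => h.isOpen l)
        (disjoint_iUnion₂_right.2 fun l hl => h.disjoint (Ne.symm hl)) hrange
        ⟨p, ⟨0, by simp [hF₀]⟩, hj⟩ ⟨t, rfl⟩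
    · rwa [hFL t hp]
  refine ⟨fun hk => ?_, hU k⟩
  by_cases hp : p ∈ ⋃ k, L k
  · obtain ⟨j, hj⟩ := mem_iUnion.1 hp
    have hpj := h.subset j hj
    rwa [← h.eq_of_mem (hU j hpj) hk]
  · rwa [hFL t hp] at hk

end IsSeparated

end Gluing

section GluingIsotopies

variable {ι T V : Type*} {n : ℕ}

namespace IsSeparated

lemma isC1Family [TopologicalSpace T] [NormedAddCommGroup V] [NormedSpace ℝ V] {U L : ι → Set V}
    (h : IsSeparated U L) {F : T → Equiv.Perm V} {Φ : ι → T → Equiv.Perm V}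
    (hΦ : ∀ k, IsC1Family (Φ k)) (hFΦ : ∀ k t, EqOn (F t) (Φ k t) (U k))
    (hF : ∀ t, EqOn (F t) id (⋃ k, L k)ᶜ) : IsC1Family F := by
  refine .of_eqOn_nhds fun p => ?_
  obtain ⟨k, hk⟩ | hp := h.exists_mem_nhds_or p
  · exact ⟨Φ k, hΦ k, U k, hk, hFΦ k⟩
  · exact ⟨_, .const (one_mem _), _, hp, hF⟩

lemma isNullIsotopy {U L : ι → Set (E n)} (h : IsSeparated U L) {F : ℝ → Equiv.Perm (E n)}
    {Φ : ι → ℝ → Equiv.Perm (E n)} (hΦ : ∀ k, IsNullIsotopy (Φ k))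
    (hFΦ : ∀ k t, EqOn (F t) (Φ k t) (U k)) (hF : ∀ t, EqOn (F t) id (⋃ k, L k)ᶜ) :
    IsNullIsotopy F := by
  refine .of_eventuallyEq fun t p => ?_
  obtain ⟨k, hk⟩ | hp := h.exists_mem_nhds_or p
  · refine ⟨Φ k, hΦ k, ?_⟩
    filter_upwards [continuousAt_snd.eventually hk] with q hq using hFΦ k q.1 hq
  · refine ⟨_, .one, ?_⟩
    filter_upwards [continuousAt_snd.eventually hp] with q hq using hF q.1 hq

lemma eq_of_eqOn {X : Type*} [TopologicalSpace X] {U L : ι → Set X} (h : IsSeparated U L)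
    {σ τ : Equiv.Perm X} (hU : ∀ k, EqOn σ τ (U k)) (hL : EqOn σ τ (⋃ k, L k)ᶜ) : σ = τ := by
  refine Equiv.ext fun p => ?_
  by_cases hp : p ∈ ⋃ k, L k
  · obtain ⟨k, hk⟩ := mem_iUnion.1 hp
    exact hU k (h.subset k hk)
  · exact hL hp

lemma mem_nullReachable {U L : ι → Set (E n)} (h : IsSeparated U L) {σ : ι → Equiv.Perm (E n)}
    (hσ : ∀ k, σ k ∈ nullReachable (L k)) {τ : Equiv.Perm (E n)}
    (hτσ : ∀ k, EqOn τ (σ k) (U k)) (hτ : EqOn τ id (⋃ k, L k)ᶜ) :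
    τ ∈ nullReachable univ := by
  choose g hg hg₀ hg₁ hgL using hσ
  obtain ⟨G, hGg, hG⟩ := h.exists_glue hgL
  refine ⟨G, h.isNullIsotopy hg hGg hG, fun t ht => ?_, fun t ht => ?_, by simp⟩
  · exact h.eq_of_eqOn (fun k p hp => by rw [hGg k t hp, hg₀ k t ht]) (hG t)
  · exact h.eq_of_eqOn (fun k p hp => by rw [hGg k t hp, hg₁ k t ht, hτσ k hp])
      ((hG t).trans hτ.symm)

lemma mem_nullReachable_of_isC1Family (i : Fin n) {U L : ι → Set (E n)} (h : IsSeparated U L)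
    (hL : ∀ k, IsCompact (L k)) {Φ : ι → unitInterval → Equiv.Perm (E n)}
    (hΦ : ∀ k, IsC1Family (Φ k)) (hΦ₀ : ∀ k, Φ k 0 = 1) (hΦL : ∀ k t, EqOn (Φ k t) id (L k)ᶜ)
    {τ : Equiv.Perm (E n)} (hτΦ : ∀ k, EqOn τ (Φ k 1) (U k)) (hτ : EqOn τ id (⋃ k, U k)ᶜ) :
    τ ∈ nullReachable univ := by
  choose M hM hLM hMU using fun k => exists_compact_between (hL k) (h.isOpen k) (h.subset k)
  have hUM : IsSeparated U M :=
    ⟨h.isOpen, h.disjoint, h.locallyFinite, fun k => (hM k).isClosed, hMU⟩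
  refine hUM.mem_nullReachable (fun k => _root_.mem_nullReachable_of_isC1Family i (hΦ k) (hΦ₀ k)
    (h.isClosed k) (hM k) (hLM k) (hΦL k)) hτΦ fun p hp => ?_
  by_cases hpU : p ∈ ⋃ k, U k
  · obtain ⟨k, hk⟩ := mem_iUnion.1 hpU
    rw [hτΦ k hk, hΦL k]
    exact fun hpL => hp (mem_iUnion.2 ⟨k, interior_subset (hLM k hpL)⟩)
  · exact hτ hpU

lemma apply_one_mem_nullReachable (i : Fin n) {U L : ι → Set (E n)} (h : IsSeparated U L)
    (hL : ∀ k, IsCompact (L k)) {F : unitInterval → Equiv.Perm (E n)} (hF : IsC1Family F)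
    (hF₀ : F 0 = 1) (hFL : ∀ t, EqOn (F t) id (⋃ k, L k)ᶜ) : F 1 ∈ nullReachable univ := by
  classical
  have hcont : ∀ p, Continuous fun t => F t p := fun p =>
    hF.continuous.comp (Continuous.prodMk_left p)
  let Φ : ι → unitInterval → Equiv.Perm (E n) := fun k t =>
    .ofSubtype ((F t).subtypePerm (p := (· ∈ U k)) (h.apply_mem_iff hcont hF₀ hFL t k))
  have hΦU : ∀ k t, EqOn (Φ k t) (F t) (U k) := fun k t p hp =>
    Equiv.Perm.ofSubtype_apply_of_mem _ hp
  have hΦL : ∀ k t, EqOn (Φ k t) id (L k)ᶜ := fun k t p hp => by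
    by_cases hpU : p ∈ U k
    · rw [hΦU k t hpU, hFL t]
      simp only [mem_compl_iff, mem_iUnion, not_exists]
      intro j hj
      exact hp (h.eq_of_mem hpU (h.subset j hj) ▸ hj)
    · exact Equiv.Perm.ofSubtype_apply_of_not_mem _ hpU
  have hΦ : ∀ k, IsC1Family (Φ k) := fun k => .of_eqOn_nhds fun p => by
    by_cases hp : p ∈ L k
    · exact ⟨F, hF, U k, (h.isOpen k).mem_nhds (h.subset k hp), hΦU k⟩
    · exact ⟨_, .const (one_mem _), _, (h.isClosed k).isOpen_compl.mem_nhds hp, hΦL k⟩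
  have hΦ₀ : ∀ k, Φ k 0 = 1 := fun k => Equiv.ext fun p => by
    by_cases hp : p ∈ L k
    · rw [hΦU k 0 (h.subset k hp), hF₀]
    · exact hΦL k 0 hp
  exact h.mem_nullReachable_of_isC1Family i hL hΦ hΦ₀ hΦL (fun k => (hΦU k 1).symm)
    ((hFL 1).mono (compl_subset_compl.2 (iUnion_mono h.subset)))

end IsSeparated

end GluingIsotopies

section Shells

variable {V : Type*} [NormedAddCommGroup V]

/-- The open region between the spheres of radii `S k` and `S (k + 1)`. -/
def shell (V : Type*) [NormedAddCommGroup V] (S : ℕ → ℝ) (k : ℕ) : Set V :=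
  norm ⁻¹' Ioo (S k) (S (k + 1))

lemma isCompact_norm_preimage_Icc [ProperSpace V] (a b : ℝ) :
    IsCompact (norm ⁻¹' Icc a b : Set V) :=
  (isCompact_closedBall 0 b).of_isClosed_subset (isClosed_Icc.preimage continuous_norm)
    fun _ hp => mem_closedBall_zero_iff.2 hp.2

lemma locallyFinite_Ioi_of_tendsto_cofinite {ι α : Type*} [LinearOrder α] [TopologicalSpace α]
    [OrderClosedTopology α] [NoMaxOrder α] {f : ι → α} (hf : Filter.Tendsto f .cofinite .atTop) :
    LocallyFinite fun i => Ioi (f i) := fun x => by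
  obtain ⟨y, hxy⟩ := exists_gt x
  refine ⟨Iio y, Iio_mem_nhds hxy, (hf.eventually_ge_atTop y).subset ?_⟩
  rintro i ⟨z, hfz, hzy⟩
  exact not_le_of_gt (lt_trans hfz hzy)

lemma isSeparated_shell {S : ℕ → ℝ} (hS : Monotone S) (hS' : Filter.Tendsto S .atTop .atTop)
    {L : ℕ → Set V} (hL : ∀ k, IsClosed (L k)) (hLS : ∀ k, L k ⊆ shell V S k) :
    IsSeparated (shell V S) L where
  isOpen _ := isOpen_Ioo.preimage continuous_norm
  disjoint _ _ hjk := (hS.pairwise_disjoint_on_Ioo_succ hjk).preimage _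
  locallyFinite := ((locallyFinite_Ioi_of_tendsto_cofinite (Nat.cofinite_eq_atTop ▸ hS')).subset
    fun _ => Ioo_subset_Ioi_self).preimage_continuous continuous_norm
  isClosed := hL
  subset := hLS

lemma tendsto_atTop_of_add_one_le {r : ℕ → ℝ} (hr : ∀ k, r k + 1 ≤ r (k + 1)) :
    Filter.Tendsto r .atTop .atTop := by
  have hgrowth : ∀ k : ℕ, r 0 + k ≤ r k := fun k => by
    induction k with
    | zero => simp
    | succ k ih => push_cast; linarith [hr k]
  exact Filter.tendsto_atTop_mono hgrowth
    (Filter.tendsto_atTop_add_const_left _ _ tendsto_natCast_atTop_atTop)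

end Shells

section Fragments

variable {n : ℕ}

lemma IsC1Family.exists_radii {T V : Type*} [TopologicalSpace T] [CompactSpace T]
    [NormedAddCommGroup V] [NormedSpace ℝ V] [FiniteDimensional ℝ V]
    {F : T → Equiv.Perm V} (hF : IsC1Family F) (a : ℝ) :
    ∃ ρ : ℕ → ℝ, ρ 0 = a ∧ (∀ j, ρ j + 2 ≤ ρ (j + 1)) ∧ ∀ j t p, ‖p‖ ≤ ρ j + 1 →
      ‖F t p‖ < ρ (j + 1) ∧ ‖(F t)⁻¹ p‖ < ρ (j + 1) := by
  have := FiniteDimensional.complete ℝ V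
  have := FiniteDimensional.proper_real V
  have hbound : ∀ r : ℝ, ∃ b, r + 2 ≤ b ∧ ∀ t p, ‖p‖ ≤ r + 1 → ‖F t p‖ < b ∧ ‖(F t)⁻¹ p‖ < b := by
    intro r
    have hK : IsCompact ((univ : Set T) ×ˢ Metric.closedBall (0 : V) (r + 1)) :=
      isCompact_univ.prod (isCompact_closedBall _ _)
    obtain ⟨b, hb⟩ := hK.exists_bound_of_continuousOn hF.continuous.continuousOn
    obtain ⟨c, hc⟩ := hK.exists_bound_of_continuousOn hF.continuous_inv.continuousOn
    refine ⟨max (r + 2) (max b c + 1), le_max_left _ _, fun t p hp => ?_⟩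
    have hp' : (t, p) ∈ (univ : Set T) ×ˢ Metric.closedBall (0 : V) (r + 1) := by simpa using hp
    have hlt : max b c < max (r + 2) (max b c + 1) := (lt_add_one _).trans_le (le_max_right _ _)
    exact ⟨((hb _ hp').trans (le_max_left b c)).trans_lt hlt,
      ((hc _ hp').trans (le_max_right b c)).trans_lt hlt⟩
  choose b hb hFb using hbound
  exact ⟨fun j => b^[j] a, rfl, fun j => by simpa only [iterate_succ_apply'] using hb _,
    fun j t p hp => by simpa only [iterate_succ_apply'] using hFb _ t p hp⟩

lemma exists_isC1Family_eqOn_annuli (i : Fin n) {F : unitInterval → Equiv.Perm (E n)}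
    (hF : IsC1Family F) (hF₀ : F 0 = 1) {ρ : ℕ → ℝ} (hρ : ∀ j, ρ j + 2 ≤ ρ (j + 1))
    (hFρ : ∀ j t p, ‖p‖ ≤ ρ j + 1 → ‖F t p‖ < ρ (j + 1) ∧ ‖(F t)⁻¹ p‖ < ρ (j + 1)) :
    ∃ B : unitInterval → Equiv.Perm (E n), IsC1Family B ∧ B 0 = 1 ∧ B 1 ∈ nullReachable univ ∧
      ∀ t k, EqOn (B t) (F t) (norm ⁻¹' Icc (ρ (2 * k + 2)) (ρ (2 * k + 2) + 1)) := by
  let R : ℕ → ℝ := fun k => ρ (2 * k + 1)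
  have hR : ∀ k, R k + 1 ≤ R (k + 1) := fun k => by
    linarith [hρ (2 * k + 1), hρ (2 * k + 2), show R (k + 1) = ρ (2 * k + 3) from rfl]
  have hFR : ∀ k t, MapsTo (F t) (norm ⁻¹' Icc (ρ (2 * k + 2)) (ρ (2 * k + 2) + 1))
      (shell (E n) R k) := fun k t p hp => by
    refine ⟨lt_of_not_ge fun hlow => ?_, (hFρ _ t p hp.2).1⟩
    have hback := (hFρ (2 * k + 1) t (F t p) (hlow.trans (by simp [R]))).2
    rw [show (F t)⁻¹ (F t p) = p from (F t).symm_apply_apply p] at hback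
    exact hback.not_ge hp.1
  choose Φ hΦ hΦ₀ hΦF L hL hLR hΦL using fun k => hF.exists_eqOn_compact hF₀
    (isCompact_norm_preimage_Icc _ _) (isOpen_Ioo.preimage continuous_norm) (hFR k)
  have hRL : IsSeparated (shell (E n) R) L :=
    isSeparated_shell (monotone_nat_of_le_succ fun k => by linarith [hR k])
      (tendsto_atTop_of_add_one_le hR) (fun k => (hL k).isClosed) hLR
  obtain ⟨B, hBΦ, hBL⟩ := hRL.exists_glue hΦL
  have hB : IsC1Family B := hRL.isC1Family hΦ hBΦ hBL
  have hB₀ : B 0 = 1 :=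
    hRL.eq_of_eqOn (fun k p hp => by rw [hBΦ k 0 hp, hΦ₀ k]) (hBL 0)
  refine ⟨B, hB, hB₀, hRL.apply_one_mem_nullReachable i hL hB hB₀ hBL, fun t k p hp => ?_⟩
  have hpR : p ∈ shell (E n) R k := by simpa [hF₀] using hFR k 0 hp
  rw [hBΦ k t hpR, hΦF k t hp]

lemma mem_nullReachable_of_eqOn_annuli (i : Fin n) {C : unitInterval → Equiv.Perm (E n)}
    (hC : IsC1Family C) (hC₀ : C 0 = 1) {r : ℕ → ℝ} (hr₀ : r 0 ≤ 0)
    (hr : ∀ k, r k + 2 ≤ r (k + 1))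
    (hCr : ∀ t k, EqOn (C t) id (norm ⁻¹' Icc (r k) (r k + 1))) : C 1 ∈ nullReachable univ := by
  let S : ℕ → ℝ := fun k => r k + 1 / 2
  let L : ℕ → Set (E n) := fun k => norm ⁻¹' Icc (r k + 1) (r (k + 1))
  have hmono : Monotone r := monotone_nat_of_le_succ fun k => by linarith [hr k]
  have htop : Filter.Tendsto r .atTop .atTop :=
    tendsto_atTop_of_add_one_le fun k => by linarith [hr k]
  have hSL : IsSeparated (shell (E n) S) L :=
    isSeparated_shell (hmono.add_const _) (Filter.tendsto_atTop_add_const_right _ _ htop)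
      (fun k => isClosed_Icc.preimage continuous_norm)
      fun k p hp => ⟨by linarith [hp.1, show S k = r k + 1 / 2 from rfl],
        by linarith [hp.2, show S (k + 1) = r (k + 1) + 1 / 2 from rfl]⟩
  refine hSL.apply_one_mem_nullReachable i (fun k => isCompact_norm_preimage_Icc _ _) hC hC₀
    fun t p hp => ?_
  obtain ⟨k, hk, hk'⟩ : ∃ k, ‖p‖ ∈ Ico (r k) (r (k + 1)) := by
    have hmem : ‖p‖ ∈ ⋃ k, Ico (r k) (r (Order.succ k)) := by
      rw [iUnion_Ico_map_succ_eq_Ici (fun k => hmono bot_le)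
        (Filter.not_bddAbove_of_tendsto_atTop htop)]
      exact hr₀.trans (norm_nonneg p)
    simpa using hmem
  refine hCr t k ⟨hk, le_of_not_gt fun hlt => hp (mem_iUnion.2 ⟨k, hlt.le, hk'.le⟩)⟩

lemma IsC1Family.apply_one_mem_nullReachable (i : Fin n) {F : unitInterval → Equiv.Perm (E n)}
    (hF : IsC1Family F) (hF₀ : F 0 = 1) : F 1 ∈ nullReachable univ := by
  obtain ⟨ρ, hρ₀, hρ, hFρ⟩ := hF.exists_radii (-2)
  obtain ⟨B, hB, hB₀, hB₁, hBF⟩ := exists_isC1Family_eqOn_annuli i hF hF₀ hρ hFρ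
  have hρ₂ : ∀ k, ρ (2 * k) + 4 ≤ ρ (2 * (k + 1)) := fun k => by
    linarith [hρ (2 * k), hρ (2 * k + 1), show ρ (2 * (k + 1)) = ρ (2 * k + 2) from rfl]
  have hC₁ : (B 1)⁻¹ * F 1 ∈ nullReachable univ := by
    refine mem_nullReachable_of_eqOn_annuli i (hB.inv.mul hF) (by simp [hB₀, hF₀])
      (r := fun k => ρ (2 * k)) (by simp [hρ₀]) (fun k => by linarith [hρ₂ k]) fun t k p hp => ?_
    obtain _ | k := k
    · linarith [hp.2, norm_nonneg p]
    · exact Equiv.Perm.inv_eq_iff_eq.2 (hBF t k hp).symm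
  simpa using mul_mem hB₁ hC₁

end Fragments

section PositivePaths

variable {n : ℕ} {f : E n → E n} {σ τ : Equiv.Perm (E n)}

lemma IsDiffeo.exists_mem_diffeoGroup (hf : IsDiffeo n f) : ∃ σ ∈ diffeoGroup (E n), ⇑σ = f :=
  let ⟨hf', g, hg, hgf, hfg⟩ := hf
  ⟨⟨f, g, hgf, hfg⟩, ⟨hf', hg⟩, rfl⟩

lemma isDiffeo_of_mem_diffeoGroup (hσ : σ ∈ diffeoGroup (E n)) : IsDiffeo n σ :=
  ⟨hσ.1, ⇑σ⁻¹, hσ.2, σ.symm_apply_apply, σ.apply_symm_apply⟩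

lemma IsC1Family.of_contDiff {T V : Type*} [TopologicalSpace T] [NormedAddCommGroup V]
    [NormedSpace ℝ V] {H : ℝ × V → V} (hH : ContDiff ℝ ∞ H) {c : T → ℝ} (hc : Continuous c)
    {F : T → Equiv.Perm V} (hF : ∀ t, F t ∈ diffeoGroup V) (hFH : ∀ t p, F t p = H (c t, p)) :
    IsC1Family F := by
  have hcq : Continuous fun q : T × V => (c q.1, q.2) := hc.prodMap continuous_id
  have hfderiv : ∀ q : T × V, fderiv ℝ (F q.1) q.2 =
      (fderiv ℝ H (c q.1, q.2)).comp (.inr ℝ ℝ V) := fun q => by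
    rw [show ⇑(F q.1) = fun p => H (c q.1, p) from funext (hFH q.1)]
    exact ((hH.differentiable (by simp) _).hasFDerivAt.comp q.2
      (hasFDerivAt_prodMk_right (c q.1) q.2)).fderiv
  refine ⟨hF, ?_, ?_⟩
  · simp only [hFH]
    exact hH.continuous.comp hcq
  · simp only [hfderiv]
    exact ((hH.continuous_fderiv (by simp)).comp hcq).clm_comp continuous_const

lemma ConnToId.exists_isC1Family (hf : ConnToId n f) : ∃ F : unitInterval → Equiv.Perm (E n),
    IsC1Family F ∧ F 0 = 1 ∧ ⇑(F 1) = f := by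
  obtain ⟨H, ⟨hH, hHdiffeo⟩, hH₀, hH₁⟩ := hf
  choose F hF hFH using fun t : unitInterval => (hHdiffeo t t.2).exists_mem_diffeoGroup
  exact ⟨F, .of_contDiff hH continuous_subtype_val hF fun t p => congr($(hFH t) p),
    Equiv.ext fun p => congr($(hFH 0) p).trans (hH₀ p), (hFH 1).trans (funext hH₁)⟩

lemma addRight_mem_diffeoGroup {V : Type*} [NormedAddCommGroup V] [NormedSpace ℝ V] (v : V) :
    Equiv.addRight v ∈ diffeoGroup V :=
  ⟨contDiff_id.add contDiff_const, contDiff_id.add contDiff_const⟩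

lemma isC1Family_addRight {V : Type*} [NormedAddCommGroup V] [NormedSpace ℝ V] (v : V) :
    IsC1Family fun t : unitInterval => Equiv.addRight ((t : ℝ) • v) :=
  .of_contDiff (contDiff_snd.add (contDiff_fst.smul contDiff_const)) continuous_subtype_val
    (fun _ => addRight_mem_diffeoGroup _) fun _ _ => rfl

/-- The Reeb vector field `∂_z` of `α₀`, which is constant. -/
def reeb (n : ℕ) : E n := (0, 0, 1)

lemma α₀_add_smul_reeb (p v : E n) (t : ℝ) :
    α₀ n (p + t • reeb n) (v + reeb n) = α₀ n p v + 1 := by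
  simp [α₀, reeb]
  ring

lemma exists_isPositivePath_of_mem_nullReachable (hσ : σ ∈ nullReachable univ)
    (hτ : τ ∈ diffeoGroup (E n)) : ∃ g : ℝ × E n → E n, IsSmoothPath n g ∧ IsPositivePath n g ∧
      (∀ p, g (0, p) = τ p) ∧ ∀ p, g (1, p) = σ (τ p) + reeb n := by
  obtain ⟨ν, hν, hν₀, hν₁, -⟩ := hσ
  have hντ := hν.mul_right hτ
  refine ⟨fun q => ν q.1 (τ q.2) + q.1 • reeb n,
    ⟨hντ.contDiff.add (contDiff_fst.smul contDiff_const), fun t _ =>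
      isDiffeo_of_mem_diffeoGroup (mul_mem (addRight_mem_diffeoGroup (t • reeb n)) (hντ.mem t))⟩,
    fun t _ p => ?_, fun p => by simp [hν₀ 0 le_rfl], fun p => by simp [hν₁ 1 le_rfl]⟩
  have hνp : ContDiff ℝ ∞ fun s => ν s (τ p) :=
    hντ.contDiff.comp (contDiff_id.prodMk contDiff_const)
  have hderiv : HasDerivAt (fun s => ν s (τ p) + s • reeb n)
      (deriv (fun s => ν s (τ p)) t + reeb n) t := by
    simpa only [one_smul] using! (hνp.differentiable (by simp) t).hasDerivAt.add
      ((hasDerivAt_id t).smul_const (reeb n))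
  rw [pathDeriv, hderiv.deriv, α₀_add_smul_reeb, hν.null]
  norm_num

end PositivePaths

/-- Any two diffeomorphisms of `ℝ^{2n+1}`, each connected to the identity by a
smooth path of diffeomorphisms, are connected to each other by a positive path of
diffeomorphisms. -/
theorem positive_path_between_diffeos (n : ℕ) (hn : 1 ≤ n) (f h : E n → E n)
    (hf : IsDiffeo n f) (hh : IsDiffeo n h)
    (hfconn : ConnToId n f) (hhconn : ConnToId n h) :
    ∃ g : ℝ × E n → E n, IsSmoothPath n g ∧ IsPositivePath n g ∧
      (∀ p, g (0, p) = f p) ∧ (∀ p, g (1, p) = h p) := by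
  obtain ⟨F, hF, hF₀, hFf⟩ := hfconn.exists_isC1Family
  obtain ⟨H, hH, hH₀, hHh⟩ := hhconn.exists_isC1Family
  let σ : Equiv.Perm (E n) := (Equiv.addRight (reeb n))⁻¹ * H 1 * (F 1)⁻¹
  have hσ : σ ∈ nullReachable univ := by
    have hσF := ((isC1Family_addRight (reeb n)).inv.mul hH).mul hF.inv
    simpa [σ] using hσF.apply_one_mem_nullReachable ⟨0, hn⟩ (by simp [hF₀, hH₀])
  have hσF : ∀ p, σ (F 1 p) + reeb n = H 1 p := fun p => by simp [σ]
  obtain ⟨g, hg, hgpos, hg₀, hg₁⟩ := exists_isPositivePath_of_mem_nullReachable hσ (hF.mem 1)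
  exact ⟨g, hg, hgpos, fun p => by rw [hg₀, hFf], fun p => by rw [hg₁, hσF, hHh]⟩
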